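/- Let n ≥ 2 be an integer and φ ∈ ℝ, and let Q = [[e^{iφ/2}, 0], [0, 1]]. Then (Q ⊗ Q) · 𝔅ₙ · (Q ⊗ Q)⁻¹ = 𝔅ₙ,φ, where ⊗ is the Kronecker product; that is, conjugating 𝔅ₙ by Q ⊗ Q yields the q-deformed matrix 𝔅ₙ,φ. -/

import Mathlib

/-!
Conjugation by `diag(d)` multiplies the `(i, j)` entry by `dᵢ / dⱼ`. For `diag(p, r) ⊗ diag(p, r)`
the diagonal in the basis 00, 01, 10, 11 is `p², pr, rp, r²`, so this factor is `1` on the diagonal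
and on the middle block, and `(p / r)²`, `(r / p)²` at the two corners. For `Q` one has
`p / r = e^{iφ/2}`, and squaring gives the phases `e^{±iφ}`.
-/

open Matrix Complex
open scoped Kronecker

/-- The gate 𝔅ₙ obtained from the cyclic group of order n. -/
noncomputable def Bn (n : ℕ) : Matrix (Fin 4) (Fin 4) ℂ :=
  let α : ℂ := (Real.cos (2 * Real.pi / n) : ℂ)
  let β : ℂ := -Complex.I * (Real.sin (2 * Real.pi / n) : ℂ)
  !![α, 0, 0, β; 0, -β, α, 0; 0, α, -β, 0; β, 0, 0, α]

/-- The q-deformed gate 𝔅ₙ,φ. -/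
noncomputable def Bnφ (n : ℕ) (φ : ℝ) : Matrix (Fin 4) (Fin 4) ℂ :=
  let a : ℂ := (Real.cos (2 * Real.pi / n) : ℂ)
  let b : ℂ := (Real.sin (2 * Real.pi / n) : ℂ)
  !![a, 0, 0, -Complex.I * b * Complex.exp (Complex.I * φ);
     0, Complex.I * b, a, 0;
     0, a, Complex.I * b, 0;
     -Complex.I * b * Complex.exp (-(Complex.I * φ)), 0, 0, a]

/-- The diagonal phase matrix Q. -/
noncomputable def Q (φ : ℝ) : Matrix (Fin 2) (Fin 2) ℂ :=
  !![Complex.exp (Complex.I * φ / 2), 0; 0, 1]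

section DiagonalConjugation

variable {K : Type*} [Field K]

theorem diagonal_mul_mul_inv_diagonal_apply {ι : Type*} [Fintype ι] [DecidableEq ι] {d : ι → K}
    (hd : ∀ i, d i ≠ 0) (A : Matrix ι ι K) (i j : ι) :
    (diagonal d * A * (diagonal d)⁻¹) i j = d i * A i j / d j := by
  have inv_diagonal_eq : (diagonal d)⁻¹ = diagonal d⁻¹ := by
    refine inv_eq_right_inv ?_
    simp [hd]
  rw [inv_diagonal_eq, mul_diagonal, diagonal_mul, Pi.inv_apply, div_eq_mul_inv]

theorem reindex_diagonal_kronecker_diagonal {R : Type*} [MulZeroClass R] {m n : ℕ}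
    (v : Fin m → R) (w : Fin n → R) :
    reindex finProdFinEquiv finProdFinEquiv (diagonal v ⊗ₖ diagonal w) =
      diagonal fun k => v k.divNat * w k.modNat := by
  rw [diagonal_kronecker_diagonal, reindex_apply, submatrix_diagonal_equiv]
  rfl

theorem kronecker_diagonal_conj_apply {m n : ℕ} {v : Fin m → K} {w : Fin n → K}
    (hv : ∀ i, v i ≠ 0) (hw : ∀ i, w i ≠ 0) (A : Matrix (Fin (m * n)) (Fin (m * n)) K)
    (k l : Fin (m * n)) :
    (reindex finProdFinEquiv finProdFinEquiv (diagonal v ⊗ₖ diagonal w) * A *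
        (reindex finProdFinEquiv finProdFinEquiv (diagonal v ⊗ₖ diagonal w))⁻¹) k l =
      v k.divNat * w k.modNat * A k l / (v l.divNat * w l.modNat) := by
  rw [reindex_diagonal_kronecker_diagonal]
  exact diagonal_mul_mul_inv_diagonal_apply (fun _ => mul_ne_zero (hv _) (hw _)) A k l

/-- The shape of the R-matrix of the eight-vertex model: an operator on two qubits that preserves
the spans of 00, 11 (where it acts by `outer`) and of 01, 10 (where it acts by `inner`). -/
def eightVertex {R : Type*} [Zero R] (outer inner : Matrix (Fin 2) (Fin 2) R) :
    Matrix (Fin 4) (Fin 4) R :=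
  !![outer 0 0, 0, 0, outer 0 1;
     0, inner 0 0, inner 0 1, 0;
     0, inner 1 0, inner 1 1, 0;
     outer 1 0, 0, 0, outer 1 1]

theorem kronecker_diagonal_conj_eightVertex {p r : K} (hp : p ≠ 0) (hr : r ≠ 0)
    (a b c d : K) (inner : Matrix (Fin 2) (Fin 2) K) :
    (reindex finProdFinEquiv finProdFinEquiv (diagonal ![p, r] ⊗ₖ diagonal ![p, r]) :
          Matrix (Fin 4) (Fin 4) K) * eightVertex !![a, b; c, d] inner *
        (reindex finProdFinEquiv finProdFinEquiv (diagonal ![p, r] ⊗ₖ diagonal ![p, r]) :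
          Matrix (Fin 4) (Fin 4) K)⁻¹ =
      eightVertex !![a, b * (p / r) ^ 2; c * (r / p) ^ 2, d] inner := by
  have hpr : ∀ i, ![p, r] i ≠ 0 := by simp [Fin.forall_fin_two, hp, hr]
  ext k l
  rw [kronecker_diagonal_conj_apply hpr hpr]
  fin_cases k <;> fin_cases l <;> simp [eightVertex, Fin.divNat, Fin.modNat, field]

end DiagonalConjugation

theorem Bn_eq_eightVertex (n : ℕ) :
    Bn n =
      eightVertex
        !![(Real.cos (2 * Real.pi / n) : ℂ), -I * Real.sin (2 * Real.pi / n);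
           -I * Real.sin (2 * Real.pi / n), Real.cos (2 * Real.pi / n)]
        !![I * Real.sin (2 * Real.pi / n), Real.cos (2 * Real.pi / n);
           Real.cos (2 * Real.pi / n), I * Real.sin (2 * Real.pi / n)] := by
  simp [Bn, eightVertex]

theorem Q_eq_diagonal (φ : ℝ) : Q φ = diagonal ![exp (I * φ / 2), 1] :=
  (diagonal_vec2 _ _).symm

theorem exp_half_sq (z : ℂ) : exp (z / 2) ^ 2 = exp z := by
  rw [← exp_nat_mul, Nat.cast_ofNat, mul_div_cancel₀ z two_ne_zero]

/-- Conjugating 𝔅ₙ by Q ⊗ Q yields the q-deformed matrix 𝔅ₙ,φ. -/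
theorem Bn_q_deformation (n : ℕ) (hn : 2 ≤ n) (φ : ℝ) :
    (Matrix.reindex finProdFinEquiv finProdFinEquiv (Q φ ⊗ₖ Q φ) : Matrix (Fin 4) (Fin 4) ℂ)
      * Bn n *
      (Matrix.reindex finProdFinEquiv finProdFinEquiv (Q φ ⊗ₖ Q φ) : Matrix (Fin 4) (Fin 4) ℂ)⁻¹
    = Bnφ n φ := by
  have phase : (exp (I * φ / 2) / 1) ^ 2 = exp (I * φ) := by
    rw [div_one, exp_half_sq]
  have phase_inv : (1 / exp (I * φ / 2)) ^ 2 = exp (-(I * φ)) := by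
    rw [one_div, inv_pow, exp_half_sq, exp_neg]
  rw [Q_eq_diagonal, Bn_eq_eightVertex,
    kronecker_diagonal_conj_eightVertex (exp_ne_zero _) one_ne_zero, phase, phase_inv]
  rfl
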